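/- arXiv:1310.3193 — 2 statements merged into one kernel-verified Lean document; each statement's English description precedes it below -/
import Mathlib

section
/- Let n ≥ 2. There exist constants 0 < c ≤ C such that for every x in the open unit ball B of ℝⁿ, c ≤ (1−|x|)·∫_{∂B} |x−θ|^{−n} dH^{n−1}(θ) ≤ C. -/
open MeasureTheory Real Set

lemma aux_ball (m : ℕ) : ∃ A : ℝ, 0 < A ∧ ∀ r : ℝ, 0 < r →
    μH[(m : ℝ)] (Metric.ball (0 : EuclideanSpace ℝ (Fin m)) r) = ENNReal.ofReal (A * r ^ m) := by
  have hH : Measure.IsAddHaarMeasure (μH[(m : ℝ)] : Measure (EuclideanSpace ℝ (Fin m))) := by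
    simpa using MeasureTheory.isAddHaarMeasure_hausdorffMeasure (E := EuclideanSpace ℝ (Fin m))
  have h1 : μH[(m : ℝ)] (Metric.ball (0 : EuclideanSpace ℝ (Fin m)) 1) ≠ ⊤ :=
    measure_ball_lt_top.ne
  have h0 : 0 < μH[(m : ℝ)] (Metric.ball (0 : EuclideanSpace ℝ (Fin m)) 1) :=
    Metric.measure_ball_pos _ _ one_pos
  refine ⟨(μH[(m : ℝ)] (Metric.ball (0 : EuclideanSpace ℝ (Fin m)) 1)).toReal,
    ENNReal.toReal_pos h0.ne' h1, fun r hr => ?_⟩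
  rw [Measure.addHaar_ball_of_pos _ _ hr, finrank_euclideanSpace_fin,
    ENNReal.ofReal_mul ENNReal.toReal_nonneg, ENNReal.ofReal_toReal h1, mul_comm]

lemma aux_iota (m : ℕ) (z : EuclideanSpace ℝ (Fin (m + 1))) (hz : ‖z‖ = 1) :
    ∃ i : EuclideanSpace ℝ (Fin m) →ₗᵢ[ℝ] EuclideanSpace ℝ (Fin (m + 1)),
      (∀ v, inner ℝ z (i v) = 0) ∧ ∀ w, inner ℝ z w = 0 → ∃ v, i v = w := by
  have hz0 : z ≠ 0 := by
    rintro rfl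
    simp at hz
  have : Fact (Module.finrank ℝ (EuclideanSpace ℝ (Fin (m + 1))) = m + 1) := ⟨by simp⟩
  let b := OrthonormalBasis.fromOrthogonalSpanSingleton (𝕜 := ℝ) m hz0
  refine ⟨(Submodule.subtypeₗᵢ _).comp b.repr.symm.toLinearIsometry, fun v => ?_, fun w hw => ?_⟩
  · exact Submodule.mem_orthogonal_singleton_iff_inner_right.1 (b.repr.symm v).2
  · refine ⟨b.repr ⟨w, Submodule.mem_orthogonal_singleton_iff_inner_right.2 hw⟩, ?_⟩
    simp

lemma aux_norm {E : Type*} [NormedAddCommGroup E] [InnerProductSpace ℝ E] (z w : E) (t : ℝ)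
    (hz : ‖z‖ = 1) (h : inner ℝ z w = 0) : ‖t • z + w‖ ^ 2 = t ^ 2 + ‖w‖ ^ 2 := by
  rw [norm_add_sq_real, inner_smul_left, h, norm_smul, hz]
  simp

lemma aux_radial {E : Type*} [NormedAddCommGroup E] [NormedSpace ℝ E] (a b : E)
    (ha : 1 ≤ ‖a‖) (hb : 1 ≤ ‖b‖) : ‖‖a‖⁻¹ • a - ‖b‖⁻¹ • b‖ ≤ 2 * ‖a - b‖ := by
  have e : ‖a‖⁻¹ • a - ‖b‖⁻¹ • b = ‖a‖⁻¹ • (a - b) + (‖a‖⁻¹ - ‖b‖⁻¹) • b := by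
    module
  have ha' : ‖a‖⁻¹ ≤ 1 := inv_le_one_of_one_le₀ ha
  have ha0 : 0 ≤ ‖a‖⁻¹ := by positivity
  have h2 : |‖a‖⁻¹ - ‖b‖⁻¹| * ‖b‖ = ‖a‖⁻¹ * |‖b‖ - ‖a‖| := by
    have : ‖a‖⁻¹ - ‖b‖⁻¹ = ‖a‖⁻¹ * ‖b‖⁻¹ * (‖b‖ - ‖a‖) := by
      field_simp
    rw [this, abs_mul, abs_of_nonneg (by positivity)]
    field_simp
  have h3 : |‖b‖ - ‖a‖| ≤ ‖a - b‖ := by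
    rw [abs_sub_comm]; exact abs_norm_sub_norm_le a b
  rw [e]
  refine (norm_add_le _ _).trans ?_
  rw [norm_smul, norm_smul, Real.norm_eq_abs, Real.norm_eq_abs, h2, abs_of_nonneg ha0]
  have h4 := mul_le_mul ha' h3 (abs_nonneg _) zero_le_one
  have h5 := mul_le_mul_of_nonneg_right ha' (norm_nonneg (a - b))
  linarith

lemma aux_cap_small (m : ℕ) : ∃ K : ℝ, 0 < K ∧
    ∀ z : EuclideanSpace ℝ (Fin (m + 1)), ‖z‖ = 1 → ∀ r : ℝ, 0 < r → r ≤ 1 →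
    μH[(m : ℝ)] (Metric.sphere 0 1 ∩ Metric.ball z r) ≤ ENNReal.ofReal (K * r ^ m) := by
  obtain ⟨A, hA, hball⟩ := aux_ball m
  refine ⟨2 ^ m * (A * 2 ^ m), by positivity, fun z hz r hr hr1 => ?_⟩
  obtain ⟨i, hi, hi'⟩ := aux_iota m z hz
  let g : EuclideanSpace ℝ (Fin m) → EuclideanSpace ℝ (Fin (m + 1)) :=
    fun v => ‖(1 : ℝ) • z + i v‖⁻¹ • ((1 : ℝ) • z + i v)
  have hn1 : ∀ v, 1 ≤ ‖(1 : ℝ) • z + i v‖ := by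
    intro v
    have := aux_norm z (i v) 1 hz (hi v)
    nlinarith [norm_nonneg ((1 : ℝ) • z + i v), sq_nonneg ‖i v‖]
  have hg : LipschitzWith 2 g := by
    refine LipschitzWith.of_dist_le_mul fun v w => ?_
    rw [dist_eq_norm, dist_eq_norm]
    refine (aux_radial _ _ (hn1 v) (hn1 w)).trans ?_
    rw [add_sub_add_left_eq_sub, ← map_sub, i.norm_map]
    simp
  have hsub : Metric.sphere 0 1 ∩ Metric.ball z r ⊆ g '' Metric.ball 0 (2 * r) := by
    rintro θ ⟨hθ, hθz⟩
    have hθ1 : ‖θ‖ = 1 := by simpa using hθ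
    have hd : ‖θ - z‖ < r := by simpa [dist_eq_norm] using hθz
    set t : ℝ := inner ℝ z θ with ht
    have hsq : ‖θ - z‖ ^ 2 = 2 - 2 * t := by
      rw [norm_sub_sq_real, hθ1, hz, real_inner_comm]; ring
    have ht2 : 1 / 2 ≤ t := by nlinarith [norm_nonneg (θ - z)]
    have ht0 : 0 < t := by linarith
    have horth : inner ℝ z (t⁻¹ • θ - z) = 0 := by
      rw [inner_sub_right, inner_smul_right, ← ht, real_inner_self_eq_norm_sq, hz]
      field_simp
      norm_num
    obtain ⟨v, hv⟩ := hi' _ horth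
    refine ⟨v, ?_, ?_⟩
    · rw [mem_ball_zero_iff, ← i.norm_map, hv]
      have h1 := aux_norm z (t⁻¹ • θ - z) 1 hz horth
      have e : (1 : ℝ) • z + (t⁻¹ • θ - z) = t⁻¹ • θ := by module
      rw [e, norm_smul, hθ1, mul_one, Real.norm_eq_abs, abs_of_pos (inv_pos.2 ht0)] at h1
      have h2 : t⁻¹ ≤ 2 := by
        rw [inv_le_comm₀ ht0 two_pos]; linarith
      have h3 : t * t⁻¹ = 1 := mul_inv_cancel₀ ht0.ne'
      have ht1 : t ≤ 1 := by nlinarith [sq_nonneg ‖θ - z‖]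
      have hti : 0 < t⁻¹ := inv_pos.2 ht0
      have h4 : ‖t⁻¹ • θ - z‖ ^ 2 ≤ 4 * ‖θ - z‖ ^ 2 := by
        have h6 : ‖t⁻¹ • θ - z‖ ^ 2 = (t⁻¹ * t⁻¹) * ((1 - t) * (1 + t)) := by
          have : (t⁻¹ * t⁻¹) * ((1 - t) * (1 + t)) = t⁻¹ ^ 2 - (t * t⁻¹) ^ 2 := by ring
          rw [this, h3]; linarith
        have h7 : t⁻¹ * t⁻¹ ≤ 2 * 2 := mul_le_mul h2 h2 hti.le (by norm_num)
        have h8 : (1 - t) * (1 + t) ≤ (1 - t) * 2 :=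
          mul_le_mul_of_nonneg_left (by linarith) (by linarith)
        rw [h6, hsq]
        have h9 := mul_le_mul h7 h8 (mul_nonneg (by linarith) (by linarith)) (by norm_num)
        linarith
      have h5 : ‖t⁻¹ • θ - z‖ ≤ 2 * ‖θ - z‖ := by
        refine le_of_sq_le_sq ?_ (by positivity)
        linarith
      linarith
    · simp only [g, hv]
      have e : (1 : ℝ) • z + (t⁻¹ • θ - z) = t⁻¹ • θ := by module
      rw [e, norm_smul, hθ1, mul_one, Real.norm_eq_abs, abs_of_pos (inv_pos.2 ht0), inv_inv,
        smul_smul, mul_inv_cancel₀ ht0.ne', one_smul]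
  refine (measure_mono hsub).trans ((hg.hausdorffMeasure_image_le (Nat.cast_nonneg m) _).trans ?_)
  rw [hball _ (by positivity), ENNReal.rpow_natCast]
  have : ((2 : NNReal) : ENNReal) ^ m = ENNReal.ofReal (2 ^ m) := by
    rw [ENNReal.ofReal_pow (by norm_num)]; simp
  rw [this, ← ENNReal.ofReal_mul (by positivity)]
  apply ENNReal.ofReal_le_ofReal
  rw [mul_pow]
  apply le_of_eq
  ring

lemma aux_sphere_fin (m : ℕ) :
    μH[(m : ℝ)] (Metric.sphere (0 : EuclideanSpace ℝ (Fin (m + 1))) 1) < ⊤ := by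
  obtain ⟨K, hK, h⟩ := aux_cap_small m
  refine (isCompact_sphere (0 : EuclideanSpace ℝ (Fin (m + 1))) 1).measure_lt_top_of_nhdsWithin
    fun z hz => ?_
  refine ⟨Metric.sphere 0 1 ∩ Metric.ball z 1, ?_, ?_⟩
  · exact inter_mem_nhdsWithin _ (Metric.ball_mem_nhds z one_pos)
  · exact (h z (by simpa using hz) 1 one_pos le_rfl).trans_lt ENNReal.ofReal_lt_top

lemma aux_cap_upper (m : ℕ) : ∃ K : ℝ, 0 < K ∧
    ∀ z : EuclideanSpace ℝ (Fin (m + 1)), ‖z‖ = 1 → ∀ r : ℝ, 0 < r →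
    μH[(m : ℝ)] (Metric.sphere 0 1 ∩ Metric.ball z r) ≤ ENNReal.ofReal (K * r ^ m) := by
  obtain ⟨K, hK, h⟩ := aux_cap_small m
  have hf := aux_sphere_fin m
  set M := (μH[(m : ℝ)] (Metric.sphere (0 : EuclideanSpace ℝ (Fin (m + 1))) 1)).toReal with hM
  have hM0 : 0 ≤ M := ENNReal.toReal_nonneg
  refine ⟨K + M, by positivity, fun z hz r hr => ?_⟩
  rcases le_total r 1 with h1 | h1
  · refine (h z hz r hr h1).trans (ENNReal.ofReal_le_ofReal ?_)
    gcongr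
    linarith
  · refine (measure_mono inter_subset_left).trans ?_
    rw [← ENNReal.ofReal_toReal hf.ne]
    apply ENNReal.ofReal_le_ofReal
    have : 1 ≤ r ^ m := one_le_pow₀ h1
    rw [← hM]
    nlinarith

lemma aux_cap_lower (m : ℕ) : ∃ k : ℝ, 0 < k ∧
    ∀ z : EuclideanSpace ℝ (Fin (m + 1)), ‖z‖ = 1 → ∀ r : ℝ, 0 < r → r ≤ 1 →
    ENNReal.ofReal (k * r ^ m) ≤ μH[(m : ℝ)] (Metric.sphere 0 1 ∩ Metric.ball z r) := by
  obtain ⟨A, hA, hball⟩ := aux_ball m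
  refine ⟨A * (1 / 2) ^ m, by positivity, fun z hz r hr hr1 => ?_⟩
  obtain ⟨i, hi, hi'⟩ := aux_iota m z hz
  let g : EuclideanSpace ℝ (Fin m) → EuclideanSpace ℝ (Fin (m + 1)) :=
    fun v => √(1 - ‖v‖ ^ 2) • z + i v
  have hg : AntilipschitzWith 1 g := by
    refine AntilipschitzWith.of_le_mul_dist fun v w => ?_
    rw [dist_eq_norm, dist_eq_norm]
    have e : g v - g w = (√(1 - ‖v‖ ^ 2) - √(1 - ‖w‖ ^ 2)) • z + i (v - w) := by
      simp only [g, map_sub]; module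
    have := aux_norm z (i (v - w)) (√(1 - ‖v‖ ^ 2) - √(1 - ‖w‖ ^ 2)) hz (hi _)
    rw [← e, i.norm_map] at this
    simp only [NNReal.coe_one, one_mul]
    refine le_of_sq_le_sq ?_ (norm_nonneg _)
    rw [this]
    nlinarith [sq_nonneg (√(1 - ‖v‖ ^ 2) - √(1 - ‖w‖ ^ 2))]
  have hsub : g '' Metric.ball 0 (1 / 2 * r) ⊆ Metric.sphere 0 1 ∩ Metric.ball z r := by
    rintro _ ⟨v, hv, rfl⟩
    have hv1 : ‖v‖ < 1 / 2 * r := by simpa using hv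
    have hv0 := norm_nonneg v
    have hp : 0 ≤ 1 - ‖v‖ ^ 2 := by nlinarith
    have hs := Real.sq_sqrt hp
    have hs0 := Real.sqrt_nonneg (1 - ‖v‖ ^ 2)
    have hs1 : √(1 - ‖v‖ ^ 2) ≤ 1 := Real.sqrt_le_one.2 (by nlinarith)
    constructor
    · have := aux_norm z (i v) (√(1 - ‖v‖ ^ 2)) hz (hi v)
      rw [hs, i.norm_map] at this
      rw [mem_sphere_zero_iff_norm]
      have h2 : ‖g v‖ ^ 2 = 1 := by
        simp only [g]; rw [this]; ring
      nlinarith [norm_nonneg (g v)]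
    · rw [Metric.mem_ball, dist_eq_norm]
      have e : g v - z = (√(1 - ‖v‖ ^ 2) - 1) • z + i v := by
        simp only [g]; module
      have := aux_norm z (i v) (√(1 - ‖v‖ ^ 2) - 1) hz (hi v)
      rw [← e, i.norm_map] at this
      have h3 : ‖g v - z‖ ^ 2 ≤ 2 * ‖v‖ ^ 2 := by
        set s := √(1 - ‖v‖ ^ 2)
        nlinarith
      refine lt_of_pow_lt_pow_left₀ 2 hr.le ?_
      nlinarith
  have := hg.le_hausdorffMeasure_image (Nat.cast_nonneg m) (Metric.ball 0 (1 / 2 * r))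
  rw [hball _ (by positivity)] at this
  simp only [ENNReal.coe_one, ENNReal.one_rpow, one_mul] at this
  refine le_trans (le_of_eq ?_) (this.trans (measure_mono hsub))
  rw [mul_pow, mul_assoc]

lemma aux_dir (m : ℕ) (x : EuclideanSpace ℝ (Fin (m + 1))) :
    ∃ z : EuclideanSpace ℝ (Fin (m + 1)), ‖z‖ = 1 ∧ x = ‖x‖ • z := by
  by_cases hx : x = 0
  · exact ⟨EuclideanSpace.single 0 1, by simp, by simp [hx]⟩
  · have : ‖x‖ ≠ 0 := norm_ne_zero_iff.2 hx
    exact ⟨‖x‖⁻¹ • x, by rw [norm_smul]; simp [this], by rw [smul_smul, mul_inv_cancel₀ this, one_smul]⟩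

lemma aux_lint_upper (m : ℕ) (K : ℝ) (hK : 0 < K)
    (h : ∀ z : EuclideanSpace ℝ (Fin (m + 1)), ‖z‖ = 1 → ∀ r : ℝ, 0 < r →
    μH[(m : ℝ)] (Metric.sphere 0 1 ∩ Metric.ball z r) ≤ ENNReal.ofReal (K * r ^ m))
    (x z : EuclideanSpace ℝ (Fin (m + 1))) (hz : ‖z‖ = 1) (δ : ℝ) (hδ : 0 < δ)
    (hxz : ‖x - z‖ = δ) (hx : ‖x‖ = 1 - δ) :
    ∫⁻ θ in Metric.sphere (0 : EuclideanSpace ℝ (Fin (m + 1))) 1,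
      ENNReal.ofReal ((‖x - θ‖ ^ (m + 1))⁻¹) ∂(μH[(m : ℝ)])
      ≤ ENNReal.ofReal (2 * K * 4 ^ m / δ) := by
  let G : ℕ → EuclideanSpace ℝ (Fin (m + 1)) → ENNReal := fun k =>
    (Metric.ball z (2 ^ k * 4 * δ)).indicator
      (fun _ => ENNReal.ofReal (((2 ^ k * δ) ^ (m + 1))⁻¹))
  have hpt : ∀ θ ∈ Metric.sphere (0 : EuclideanSpace ℝ (Fin (m + 1))) 1,
      ENNReal.ofReal ((‖x - θ‖ ^ (m + 1))⁻¹) ≤ ∑' k, G k θ := by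
    intro θ hθ
    have hθ1 : ‖θ‖ = 1 := by simpa using hθ
    have hge : δ ≤ ‖x - θ‖ := by
      have := norm_sub_norm_le θ x
      rw [norm_sub_rev] at this
      linarith
    obtain ⟨k, hk1, hk2⟩ := exists_nat_pow_near ((one_le_div hδ).2 hge) (one_lt_two)
    rw [le_div_iff₀ hδ] at hk1
    rw [div_lt_iff₀ hδ] at hk2
    have hmem : θ ∈ Metric.ball z (2 ^ k * 4 * δ) := by
      rw [Metric.mem_ball, dist_eq_norm]
      have h1 : ‖θ - z‖ ≤ ‖x - θ‖ + ‖x - z‖ := by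
        have : θ - z = -(x - θ) + (x - z) := by abel
        rw [this]
        refine (norm_add_le _ _).trans ?_
        rw [norm_neg]
      rw [pow_succ] at hk2
      linarith
    refine le_trans ?_ (ENNReal.le_tsum k)
    simp only [G]
    rw [indicator_of_mem hmem]
    apply ENNReal.ofReal_le_ofReal
    gcongr
  calc _ ≤ ∫⁻ θ in Metric.sphere (0 : EuclideanSpace ℝ (Fin (m + 1))) 1,
        ∑' k, G k θ ∂(μH[(m : ℝ)]) := setLIntegral_mono' Metric.isClosed_sphere.measurableSet hpt
    _ = ∑' k, ∫⁻ θ in Metric.sphere (0 : EuclideanSpace ℝ (Fin (m + 1))) 1,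
        G k θ ∂(μH[(m : ℝ)]) := lintegral_tsum fun k =>
          (measurable_const.indicator Metric.isOpen_ball.measurableSet).aemeasurable
    _ ≤ ∑' k : ℕ, ENNReal.ofReal (K * 4 ^ m / δ * (1 / 2) ^ k) := by
        refine ENNReal.tsum_le_tsum fun k => ?_
        simp only [G]
        rw [lintegral_indicator_const Metric.isOpen_ball.measurableSet,
          Measure.restrict_apply Metric.isOpen_ball.measurableSet, inter_comm]
        refine (mul_le_mul_right (h z hz _ (by positivity)) _).trans ?_
        rw [← ENNReal.ofReal_mul (by positivity)]
        apply ENNReal.ofReal_le_ofReal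
        apply le_of_eq
        rw [one_div, inv_pow]
        have : (2 : ℝ) ^ k ≠ 0 := by positivity
        rw [mul_pow, mul_pow, mul_pow, pow_succ, pow_succ]
        field_simp
    _ = ENNReal.ofReal (∑' k : ℕ, K * 4 ^ m / δ * (1 / 2) ^ k) := by
        rw [ENNReal.ofReal_tsum_of_nonneg (fun k => by positivity)]
        exact summable_geometric_two.mul_left _
    _ = _ := by
        rw [tsum_mul_left, tsum_geometric_two]
        congr 1
        ring

lemma aux_lint_lower (m : ℕ) (k : ℝ) (hk : 0 < k)
    (x z : EuclideanSpace ℝ (Fin (m + 1))) (δ : ℝ) (hδ : 0 < δ)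
    (h : ENNReal.ofReal (k * δ ^ m) ≤ μH[(m : ℝ)] (Metric.sphere 0 1 ∩ Metric.ball z δ))
    (hxz : ‖x - z‖ = δ) (hx : ‖x‖ = 1 - δ) :
    ENNReal.ofReal (k / 2 ^ (m + 1) / δ) ≤
    ∫⁻ θ in Metric.sphere (0 : EuclideanSpace ℝ (Fin (m + 1))) 1,
      ENNReal.ofReal ((‖x - θ‖ ^ (m + 1))⁻¹) ∂(μH[(m : ℝ)]) := by
  calc _ = ENNReal.ofReal (((2 * δ) ^ (m + 1))⁻¹) * ENNReal.ofReal (k * δ ^ m) := by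
        rw [← ENNReal.ofReal_mul (by positivity)]
        congr 1
        rw [mul_pow, pow_succ δ]
        field_simp
    _ ≤ ENNReal.ofReal (((2 * δ) ^ (m + 1))⁻¹) *
          μH[(m : ℝ)] (Metric.sphere 0 1 ∩ Metric.ball z δ) := mul_le_mul_right h _
    _ = ∫⁻ θ in Metric.sphere (0 : EuclideanSpace ℝ (Fin (m + 1))) 1 ∩ Metric.ball z δ,
          ENNReal.ofReal (((2 * δ) ^ (m + 1))⁻¹) ∂(μH[(m : ℝ)]) := by
        rw [setLIntegral_const]
    _ ≤ ∫⁻ θ in Metric.sphere (0 : EuclideanSpace ℝ (Fin (m + 1))) 1 ∩ Metric.ball z δ,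
          ENNReal.ofReal ((‖x - θ‖ ^ (m + 1))⁻¹) ∂(μH[(m : ℝ)]) := by
        refine setLIntegral_mono'
          (Metric.isClosed_sphere.measurableSet.inter Metric.isOpen_ball.measurableSet) ?_
        rintro θ ⟨hθ, hθz⟩
        have hθ1 : ‖θ‖ = 1 := by simpa using hθ
        have hd : ‖z - θ‖ < δ := by
          rw [norm_sub_rev]; simpa [dist_eq_norm] using hθz
        have hge : δ ≤ ‖x - θ‖ := by
          have := norm_sub_norm_le θ x
          rw [norm_sub_rev] at this
          linarith
        have hpos : 0 < ‖x - θ‖ := by linarith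
        have hle : ‖x - θ‖ ≤ 2 * δ := by
          have := norm_sub_le_norm_sub_add_norm_sub x z θ
          linarith
        apply ENNReal.ofReal_le_ofReal
        gcongr
    _ ≤ _ := lintegral_mono_set inter_subset_left

/-- For `n ≥ 2` there exist `0 < c ≤ C` such that for every `x` in the open unit ball,
`c ≤ (1−|x|)·∫_{∂B} |x−θ|^{−n} dH^{n−1}(θ) ≤ C`. -/
theorem martin_normalization_bounds (n : ℕ) (hn : 2 ≤ n) :
    ∃ c C : ℝ, 0 < c ∧ c ≤ C ∧
      ∀ x ∈ Metric.ball (0 : EuclideanSpace ℝ (Fin n)) 1,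
        c ≤ (1 - ‖x‖) *
            (∫ θ in Metric.sphere (0 : EuclideanSpace ℝ (Fin n)) 1,
              (‖x - θ‖ ^ n)⁻¹ ∂(μH[(n : ℝ) - 1])) ∧
        (1 - ‖x‖) *
            (∫ θ in Metric.sphere (0 : EuclideanSpace ℝ (Fin n)) 1,
              (‖x - θ‖ ^ n)⁻¹ ∂(μH[(n : ℝ) - 1])) ≤ C := by
  obtain ⟨m, rfl⟩ : ∃ m, n = m + 1 := ⟨n - 1, by omega⟩
  have hc : ((m + 1 : ℕ) : ℝ) - 1 = (m : ℝ) := by push_cast; ring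
  rw [hc]
  obtain ⟨K, hK, hup⟩ := aux_cap_upper m
  obtain ⟨k, hk, hlo⟩ := aux_cap_lower m
  have main : ∀ x ∈ Metric.ball (0 : EuclideanSpace ℝ (Fin (m + 1))) 1,
      k / 2 ^ (m + 1) ≤ (1 - ‖x‖) *
            (∫ θ in Metric.sphere (0 : EuclideanSpace ℝ (Fin (m + 1))) 1,
              (‖x - θ‖ ^ (m + 1))⁻¹ ∂(μH[(m : ℝ)])) ∧
        (1 - ‖x‖) *
            (∫ θ in Metric.sphere (0 : EuclideanSpace ℝ (Fin (m + 1))) 1,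
              (‖x - θ‖ ^ (m + 1))⁻¹ ∂(μH[(m : ℝ)])) ≤ 2 * K * 4 ^ m := by
    intro x hx
    have hx1 : ‖x‖ < 1 := by simpa using hx
    have hx0 := norm_nonneg x
    obtain ⟨z, hz, hxz⟩ := aux_dir m x
    obtain ⟨δ, hδ⟩ : ∃ δ, δ = 1 - ‖x‖ := ⟨_, rfl⟩
    have hδ0 : 0 < δ := by linarith
    have hd : ‖x - z‖ = δ := by
      have : x - z = (-δ) • z := by
        rw [hδ, neg_smul, sub_smul, ← hxz, one_smul]; abel
      rw [this, norm_smul, hz, mul_one, norm_neg, Real.norm_eq_abs, abs_of_pos hδ0]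
    have hU := aux_lint_upper m K hK hup x z hz δ hδ0 hd (by linarith)
    have hL := aux_lint_lower m k hk x z δ hδ0 (hlo z hz δ hδ0 (by linarith)) hd (by linarith)
    have hI : ∫ θ in Metric.sphere (0 : EuclideanSpace ℝ (Fin (m + 1))) 1,
              (‖x - θ‖ ^ (m + 1))⁻¹ ∂(μH[(m : ℝ)]) =
        (∫⁻ θ in Metric.sphere (0 : EuclideanSpace ℝ (Fin (m + 1))) 1,
          ENNReal.ofReal ((‖x - θ‖ ^ (m + 1))⁻¹) ∂(μH[(m : ℝ)])).toReal := by
      refine integral_eq_lintegral_of_nonneg_ae ?_ ?_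
      · exact Filter.Eventually.of_forall fun θ => by positivity
      · exact Measurable.aestronglyMeasurable (by fun_prop)
    rw [← hδ, hI]
    constructor
    · have := (ENNReal.ofReal_le_iff_le_toReal (hU.trans_lt ENNReal.ofReal_lt_top).ne).1 hL
      rw [div_le_iff₀ hδ0] at this
      linarith
    · have := ENNReal.toReal_le_of_le_ofReal (by positivity) hU
      rw [le_div_iff₀ hδ0] at this
      linarith
  refine ⟨k / 2 ^ (m + 1), 2 * K * 4 ^ m, by positivity, ?_, main⟩
  have := main 0 (by simp)
  exact this.1.trans this.2
end

section
/- Let n ≥ 2 and let h : ∂B → ℝ be continuous. Then for every θ* ∈ ∂B, lim_{x→θ*, x∈B} (1−|x|)·∫_{∂B} |h(θ)−h(θ*)|·|x−θ|^{−n} dH^{n−1}(θ) = 0. -/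
open MeasureTheory Real Set Filter

/-- Radial projection is 1-Lipschitz outside the unit ball. -/
lemma normalize_lip {E : Type*} [NormedAddCommGroup E] [InnerProductSpace ℝ E] (a b : E)
    (ha : 1 ≤ ‖a‖) (hb : 1 ≤ ‖b‖) : ‖(‖a‖⁻¹ • a - ‖b‖⁻¹ • b : E)‖ ≤ ‖a - b‖ := by
  have ha0 : 0 < ‖a‖ := by linarith
  have hb0 : 0 < ‖b‖ := by linarith
  have h1 : ‖(‖a‖⁻¹ • a - ‖b‖⁻¹ • b : E)‖ ^ 2 = 2 - 2 * (‖a‖⁻¹ * ‖b‖⁻¹ * inner ℝ a b) := by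
    rw [norm_sub_sq_real, norm_smul, norm_smul, real_inner_smul_left, real_inner_smul_right]
    simp only [norm_inv, norm_norm]
    field_simp
    ring
  have h2 : ‖a - b‖ ^ 2 = ‖a‖ ^ 2 - 2 * inner ℝ a b + ‖b‖ ^ 2 := norm_sub_sq_real a b
  have h3 : ‖a‖ * ‖b‖ * ‖(‖a‖⁻¹ • a - ‖b‖⁻¹ • b : E)‖ ^ 2 = 2 * (‖a‖ * ‖b‖) - 2 * inner ℝ a b := by
    rw [h1]; field_simp
  have h4 : 1 ≤ ‖a‖ * ‖b‖ := by nlinarith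
  apply le_of_sq_le_sq _ (norm_nonneg _)
  nlinarith [sq_nonneg (‖a‖ - ‖b‖), sq_nonneg ‖(‖a‖⁻¹ • a - ‖b‖⁻¹ • b : E)‖]

lemma cap_bound (m : ℕ) : ∃ C : ℝ, 0 ≤ C ∧
    ∀ p ∈ Metric.sphere (0 : EuclideanSpace ℝ (Fin (m + 1))) 1, ∀ r : ℝ, 0 < r → r ≤ 1 →
      (μH[(m : ℝ)] : Measure (EuclideanSpace ℝ (Fin (m + 1))))
        (Metric.sphere 0 1 ∩ Metric.closedBall p r) ≤ ENNReal.ofReal (C * r ^ m) := by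
  have hH : Measure.IsAddHaarMeasure (μH[(m:ℝ)] : Measure (EuclideanSpace ℝ (Fin m))) := by
    have := isAddHaarMeasure_hausdorffMeasure (E := EuclideanSpace ℝ (Fin m))
    simpa using this
  set c : ENNReal := (μH[(m:ℝ)] : Measure (EuclideanSpace ℝ (Fin m))) (Metric.ball 0 1) with hcdef
  have hc : c ≠ ⊤ := measure_ball_lt_top.ne
  refine ⟨2 ^ m * c.toReal, by positivity, ?_⟩
  intro p hp r hr hr1
  have hp1 : ‖p‖ = 1 := by simpa using hp
  have hp0 : p ≠ 0 := by
    intro h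
    simp [h] at hp1
  have : Fact (Module.finrank ℝ (EuclideanSpace ℝ (Fin (m + 1))) = m + 1) := ⟨by simp⟩
  let e := (OrthonormalBasis.fromOrthogonalSpanSingleton (𝕜 := ℝ) m hp0).repr
  let Ψ : EuclideanSpace ℝ (Fin m) → EuclideanSpace ℝ (Fin (m + 1)) :=
    fun z => p + (e.symm z : EuclideanSpace ℝ (Fin (m + 1)))
  have hΨ1 : ∀ z, 1 ≤ ‖Ψ z‖ := by
    intro z
    have h0 : inner ℝ p (e.symm z : EuclideanSpace ℝ (Fin (m + 1))) = 0 :=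
      Submodule.mem_orthogonal_singleton_iff_inner_right.1 (e.symm z).2
    have h1 : ‖Ψ z‖ ^ 2 = ‖p‖ ^ 2 + 2 * inner ℝ p (e.symm z : EuclideanSpace ℝ (Fin (m + 1))) +
        ‖(e.symm z : EuclideanSpace ℝ (Fin (m + 1)))‖ ^ 2 := norm_add_sq_real _ _
    rw [h0, hp1] at h1
    nlinarith [sq_nonneg ‖(e.symm z : EuclideanSpace ℝ (Fin (m + 1)))‖, norm_nonneg (Ψ z)]
  let Φ : EuclideanSpace ℝ (Fin m) → EuclideanSpace ℝ (Fin (m + 1)) :=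
    fun z => ‖Ψ z‖⁻¹ • Ψ z
  have hΦ : LipschitzWith 1 Φ := by
    apply LipschitzWith.of_dist_le_mul
    intro z w
    rw [dist_eq_norm, dist_eq_norm]
    have h1 := normalize_lip (Ψ z) (Ψ w) (hΨ1 z) (hΨ1 w)
    have h2 : ‖Ψ z - Ψ w‖ = ‖z - w‖ := by
      have : Ψ z - Ψ w = ((e.symm (z - w) : _) : EuclideanSpace ℝ (Fin (m + 1))) := by
        simp [Ψ]
      rw [this]; exact e.symm.norm_map (z - w)
    simpa [h2] using h1
  have hsub : Metric.sphere 0 1 ∩ Metric.closedBall p r ⊆ Φ '' Metric.closedBall 0 (2 * r) := by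
    rintro θ ⟨hθ, hθr⟩
    have hθ1 : ‖θ‖ = 1 := by simpa using hθ
    have hd : ‖θ - p‖ ≤ r := by simpa [dist_eq_norm] using hθr
    set a : ℝ := inner ℝ p θ with ha
    have hda : ‖θ - p‖ ^ 2 = 2 - 2 * a := by
      rw [norm_sub_sq_real, hθ1, hp1, real_inner_comm]; ring
    have ha2 : 1 / 2 ≤ a := by nlinarith [norm_nonneg (θ - p)]
    have ha0 : 0 < a := by linarith
    have hay : ‖θ - a • p‖ ^ 2 = 1 - a ^ 2 := by
      rw [norm_sub_sq_real, hθ1, norm_smul, hp1, real_inner_smul_right, real_inner_comm, ← ha]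
      simp only [norm_eq_abs, mul_one, sq_abs]; ring
    have ha1 : a ≤ 1 := by nlinarith [sq_nonneg ‖θ - p‖]
    have hle : ‖θ - a • p‖ ≤ r := by
      refine le_trans ?_ hd
      apply le_of_sq_le_sq _ (norm_nonneg _)
      nlinarith
    have hy : a⁻¹ • θ - p ∈ (Submodule.span ℝ {p})ᗮ := by
      rw [Submodule.mem_orthogonal_singleton_iff_inner_right, inner_sub_right,
        real_inner_smul_right, ← ha, real_inner_self_eq_norm_sq, hp1]
      field_simp
      norm_num
    have hyn : ‖a⁻¹ • θ - p‖ ≤ 2 * r := by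
      have : a⁻¹ • θ - p = a⁻¹ • (θ - a • p) := by
        rw [smul_sub, smul_smul, inv_mul_cancel₀ ha0.ne', one_smul]
      rw [this, norm_smul, norm_inv, norm_eq_abs, abs_of_pos ha0]
      have : a⁻¹ ≤ 2 := by
        rw [inv_le_comm₀ ha0 (by norm_num)]; linarith
      gcongr
    refine ⟨e ⟨a⁻¹ • θ - p, hy⟩, ?_, ?_⟩
    · rw [mem_closedBall_zero_iff, e.norm_map]
      exact hyn
    · have : Ψ (e ⟨a⁻¹ • θ - p, hy⟩) = a⁻¹ • θ := by
        simp [Ψ]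
      simp only [Φ]
      rw [this, norm_smul, hθ1, norm_inv, norm_eq_abs, abs_of_pos ha0, smul_smul]
      field_simp
      simp
  calc _ ≤ μH[(m:ℝ)] (Φ '' Metric.closedBall 0 (2 * r)) := measure_mono hsub
    _ ≤ ((1 : NNReal) : ENNReal) ^ (m:ℝ) * μH[(m:ℝ)] (Metric.closedBall (0 : EuclideanSpace ℝ (Fin m)) (2 * r)) :=
      hΦ.hausdorffMeasure_image_le (by positivity) _
    _ = ENNReal.ofReal ((2 * r) ^ m) * c := by
      rw [Measure.addHaar_closedBall _ _ (by positivity)]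
      simp [hcdef]
    _ = ENNReal.ofReal ((2 * r) ^ m) * ENNReal.ofReal c.toReal := by rw [ENNReal.ofReal_toReal hc]
    _ = _ := by
      rw [← ENNReal.ofReal_mul (by positivity)]
      congr 1
      ring

lemma sphere_finite (m : ℕ) : (μH[(m : ℝ)] : Measure (EuclideanSpace ℝ (Fin (m + 1))))
        (Metric.sphere 0 1) < ⊤ := by
  obtain ⟨C, hC, hb⟩ := cap_bound m
  apply (isCompact_sphere _ _).measure_lt_top_of_nhdsWithin
  intro p hp
  refine ⟨Metric.sphere 0 1 ∩ Metric.closedBall p 1, ?_, ?_⟩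
  · exact inter_mem self_mem_nhdsWithin
      (mem_nhdsWithin_of_mem_nhds (Metric.closedBall_mem_nhds p one_pos))
  · exact (hb p hp 1 one_pos le_rfl).trans_lt ENNReal.ofReal_lt_top

lemma ball_bound (m : ℕ) : ∃ C : ℝ, 0 ≤ C ∧
    ∀ x ∈ Metric.ball (0 : EuclideanSpace ℝ (Fin (m + 1))) 1, x ≠ 0 → ∀ r : ℝ, 0 < r →
      ((μH[(m : ℝ)] : Measure (EuclideanSpace ℝ (Fin (m + 1)))).restrict (Metric.sphere 0 1))
        (Metric.ball x r) ≤ ENNReal.ofReal (C * r ^ m) := by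
  obtain ⟨C, hC, hb⟩ := cap_bound m
  have hfin := sphere_finite m
  set A : ENNReal := (μH[(m : ℝ)] : Measure (EuclideanSpace ℝ (Fin (m + 1)))) (Metric.sphere 0 1)
  refine ⟨(C + A.toReal) * 2 ^ m, by positivity, ?_⟩
  intro x hx hx0 r hr
  have hx1 : ‖x‖ < 1 := by simpa using hx
  have hxp : 0 < ‖x‖ := norm_pos_iff.2 hx0
  rw [Measure.restrict_apply measurableSet_ball]
  have hpS : ‖x‖⁻¹ • x ∈ Metric.sphere (0 : EuclideanSpace ℝ (Fin (m + 1))) 1 := by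
    simp [norm_smul, hxp.ne']
  have hsub : Metric.ball x r ∩ Metric.sphere 0 1 ⊆
      Metric.sphere 0 1 ∩ Metric.closedBall (‖x‖⁻¹ • x) (2 * r) := by
    rintro θ ⟨h1, h2⟩
    refine ⟨h2, ?_⟩
    have hθ1 : ‖θ‖ = 1 := by simpa using h2
    have hd : ‖θ - x‖ < r := by simpa [dist_eq_norm] using h1
    have h3 : 1 - ‖x‖ ≤ ‖θ - x‖ := by
      rw [← hθ1]; exact norm_sub_norm_le _ _
    have h4 : ‖x - ‖x‖⁻¹ • x‖ = 1 - ‖x‖ := by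
      have : x - ‖x‖⁻¹ • x = (1 - ‖x‖⁻¹) • x := by rw [sub_smul, one_smul]
      rw [this, norm_smul, norm_eq_abs, abs_of_nonpos]
      · field_simp; ring
      · have := (one_le_inv₀ hxp).2 hx1.le
        linarith
    rw [Metric.mem_closedBall, dist_eq_norm]
    calc _ ≤ ‖θ - x‖ + ‖x - ‖x‖⁻¹ • x‖ := norm_sub_le_norm_sub_add_norm_sub _ _ _
      _ ≤ _ := by linarith
  rcases le_or_gt (2 * r) 1 with h | h
  · refine (measure_mono hsub).trans ((hb _ hpS _ (by positivity) h).trans ?_)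
    apply ENNReal.ofReal_le_ofReal
    rw [mul_pow, ← mul_assoc]
    gcongr
    simp
  · refine (measure_mono inter_subset_right).trans ?_
    change A ≤ _
    rw [← ENNReal.ofReal_toReal hfin.ne]
    apply ENNReal.ofReal_le_ofReal
    have : 1 ≤ (2 * r) ^ m := one_le_pow₀ h.le
    rw [mul_assoc, ← mul_pow]
    have hA : 0 ≤ A.toReal := ENNReal.toReal_nonneg
    simp only [ENNReal.ofReal_toReal hfin.ne]
    nlinarith

lemma kernel_bound {E : Type*} [NormedAddCommGroup E] [MeasurableSpace E] [BorelSpace E]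
    (ν : Measure E) (m : ℕ) (C δ : ℝ) (hC : 0 ≤ C) (hδ : 0 < δ) (x : E)
    (hb : ∀ r : ℝ, 0 < r → ν (Metric.ball x r) ≤ ENNReal.ofReal (C * r ^ m))
    (hae : ∀ᵐ θ ∂ν, δ ≤ ‖x - θ‖) :
    ∫⁻ θ, ENNReal.ofReal ((‖x - θ‖ ^ (m + 1))⁻¹) ∂ν ≤ ENNReal.ofReal (C * 2 ^ (m + 1) / δ) := by
  let f : ℕ → E → ENNReal := fun k =>
    (Metric.ball x (2 ^ (k + 1) * δ)).indicator
      (fun _ => ENNReal.ofReal (((2 ^ k * δ) ^ (m + 1))⁻¹))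
  calc _ ≤ ∫⁻ θ, ∑' k, f k θ ∂ν := by
        apply lintegral_mono_ae
        filter_upwards [hae] with θ hθ
        obtain ⟨k, hk1, hk2⟩ := exists_nat_pow_near (x := ‖x - θ‖ / δ) (y := 2)
          ((one_le_div hδ).2 hθ) (by norm_num)
        rw [le_div_iff₀ hδ] at hk1
        rw [div_lt_iff₀ hδ] at hk2
        refine le_trans ?_ (ENNReal.le_tsum k)
        have hmem : θ ∈ Metric.ball x (2 ^ (k + 1) * δ) := by
          rw [Metric.mem_ball', dist_eq_norm]; exact hk2
        simp only [f, indicator_of_mem hmem]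
        apply ENNReal.ofReal_le_ofReal
        gcongr
    _ = ∑' k, ∫⁻ θ, f k θ ∂ν := by
        apply lintegral_tsum
        intro k
        exact (measurable_const.indicator measurableSet_ball).aemeasurable
    _ ≤ ∑' k : ℕ, ENNReal.ofReal (C * 2 ^ m / δ * (1 / 2) ^ k) := by
        apply ENNReal.tsum_le_tsum
        intro k
        simp only [f]
        rw [lintegral_indicator_const measurableSet_ball]
        calc _ ≤ ENNReal.ofReal (((2 ^ k * δ) ^ (m + 1))⁻¹) *
              ENNReal.ofReal (C * (2 ^ (k + 1) * δ) ^ m) := by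
              gcongr
              exact hb _ (by positivity)
          _ = _ := by
            rw [← ENNReal.ofReal_mul (by positivity)]
            congr 1
            rw [one_div, inv_pow, pow_succ 2 k, pow_succ _ m, mul_pow, mul_pow, mul_pow]
            field_simp
    _ = _ := by
        rw [← ENNReal.ofReal_tsum_of_nonneg]
        · rw [tsum_mul_left, tsum_geometric_two]
          congr 1
          ring
        · intro k; positivity
        · exact summable_geometric_two.mul_left _

/-- For `n ≥ 2` and `h` continuous on the unit sphere, for every `θ* ∈ ∂B`,
`(1−|x|)·∫_{∂B} |h(θ)−h(θ*)|·|x−θ|^{−n} dH^{n−1}(θ) → 0` as `x → θ*` from inside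
the ball. -/
theorem martin_modulus_vanishing (n : ℕ) (hn : 2 ≤ n)
    (h : EuclideanSpace ℝ (Fin n) → ℝ)
    (hc : ContinuousOn h (Metric.sphere (0 : EuclideanSpace ℝ (Fin n)) 1))
    (θs : EuclideanSpace ℝ (Fin n))
    (hθs : θs ∈ Metric.sphere (0 : EuclideanSpace ℝ (Fin n)) 1) :
    Filter.Tendsto
      (fun x : EuclideanSpace ℝ (Fin n) =>
        (1 - ‖x‖) * ∫ θ in Metric.sphere (0 : EuclideanSpace ℝ (Fin n)) 1,
          |h θ - h θs| * (‖x - θ‖ ^ n)⁻¹ ∂(μH[(n : ℝ) - 1]))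
      (nhdsWithin θs (Metric.ball 0 1)) (nhds 0) := by
  obtain ⟨m, rfl⟩ : ∃ m, n = m + 1 := ⟨n - 1, by omega⟩
  have hcast : ((m + 1 : ℕ) : ℝ) - 1 = (m : ℝ) := by push_cast; ring
  rw [hcast]
  obtain ⟨C, hC, hb⟩ := ball_bound m
  have hfin := sphere_finite m
  set S := Metric.sphere (0 : EuclideanSpace ℝ (Fin (m + 1))) 1 with hS
  set ν := (μH[(m : ℝ)] : Measure (EuclideanSpace ℝ (Fin (m + 1)))).restrict S with hν
  have : IsFiniteMeasure ν := ⟨by rw [hν, Measure.restrict_apply_univ]; exact hfin⟩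
  have hSm : MeasurableSet S := Metric.isClosed_sphere.measurableSet
  have hθn : ‖θs‖ = 1 := by simpa [hS] using hθs
  obtain ⟨M, hM⟩ : ∃ M, ∀ θ ∈ S, |h θ - h θs| ≤ M := by
    obtain ⟨M, hM⟩ := (isCompact_sphere (0 : EuclideanSpace ℝ (Fin (m + 1))) 1).exists_bound_of_continuousOn
      (hc.sub (continuousOn_const (c := h θs)))
    exact ⟨M, hM⟩
  have hM0 : 0 ≤ M := (abs_nonneg _).trans (hM θs hθs)
  have key : ∀ ε > 0, ∃ D : ℝ, ∀ᶠ x in nhdsWithin θs (Metric.ball 0 1),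
      0 ≤ (1 - ‖x‖) * ∫ θ, |h θ - h θs| * (‖x - θ‖ ^ (m + 1))⁻¹ ∂ν ∧
      (1 - ‖x‖) * ∫ θ, |h θ - h θs| * (‖x - θ‖ ^ (m + 1))⁻¹ ∂ν ≤
        ε * (C * 2 ^ (m + 1)) + (1 - ‖x‖) * D := by
    intro ε hε
    obtain ⟨η, hη, hηc⟩ := Metric.continuousOn_iff.1 hc θs hθs ε hε
    refine ⟨M * ((η / 2) ^ (m + 1))⁻¹ * ν.real univ, ?_⟩
    have hne : ∀ᶠ x in nhdsWithin θs (Metric.ball 0 1), x ≠ 0 := by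
      apply mem_nhdsWithin_of_mem_nhds
      apply isOpen_ne.mem_nhds
      intro h0
      simp [h0] at hθn
    filter_upwards [self_mem_nhdsWithin, hne,
      mem_nhdsWithin_of_mem_nhds (Metric.ball_mem_nhds θs (half_pos hη))] with x hx hx0 hxη
    have hx1 : ‖x‖ < 1 := by simpa using hx
    have hδ : 0 < 1 - ‖x‖ := by linarith
    have hxη' : ‖x - θs‖ < η / 2 := by simpa [dist_eq_norm] using hxη
    have hae : ∀ᵐ θ ∂ν, 1 - ‖x‖ ≤ ‖x - θ‖ := by
      filter_upwards [ae_restrict_mem hSm] with θ hθ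
      have hθ1 : ‖θ‖ = 1 := by simpa [hS] using hθ
      rw [← hθ1, norm_sub_rev]; exact norm_sub_norm_le _ _
    have hK := kernel_bound ν m C (1 - ‖x‖) hC hδ x (hb x hx hx0) hae
    have hKm : AEStronglyMeasurable (fun θ => (‖x - θ‖ ^ (m + 1))⁻¹) ν := by
      apply Measurable.aestronglyMeasurable
      fun_prop
    have hK0 : 0 ≤ᵐ[ν] fun θ => (‖x - θ‖ ^ (m + 1))⁻¹ :=
      Eventually.of_forall fun θ => by positivity
    have hKi : Integrable (fun θ => (‖x - θ‖ ^ (m + 1))⁻¹) ν := by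
      refine ⟨hKm, ?_⟩
      rw [hasFiniteIntegral_iff_ofReal hK0]
      exact hK.trans_lt ENNReal.ofReal_lt_top
    have hKint : ∫ θ, (‖x - θ‖ ^ (m + 1))⁻¹ ∂ν ≤ C * 2 ^ (m + 1) / (1 - ‖x‖) := by
      rw [integral_eq_lintegral_of_nonneg_ae hK0 hKm]
      exact ENNReal.toReal_le_of_le_ofReal (by positivity) hK
    have hle : ∫ θ, |h θ - h θs| * (‖x - θ‖ ^ (m + 1))⁻¹ ∂ν ≤
        ∫ θ, (ε * (‖x - θ‖ ^ (m + 1))⁻¹ + M * ((η / 2) ^ (m + 1))⁻¹) ∂ν := by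
      apply integral_mono_of_nonneg
      · exact Eventually.of_forall fun θ => by positivity
      · exact (hKi.const_mul ε).add (integrable_const _)
      · filter_upwards [ae_restrict_mem hSm] with θ hθ
        rcases lt_or_ge (dist θ θs) η with hd | hd
        · have h1 : |h θ - h θs| ≤ ε := (hηc θ hθ hd).le
          have h2 : 0 ≤ M * ((η / 2) ^ (m + 1))⁻¹ := by positivity
          have h3 : |h θ - h θs| * (‖x - θ‖ ^ (m + 1))⁻¹ ≤ ε * (‖x - θ‖ ^ (m + 1))⁻¹ := by gcongr
          linarith
        · have h1 : η / 2 ≤ ‖x - θ‖ := by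
            rw [dist_eq_norm] at hd
            have := norm_sub_le_norm_sub_add_norm_sub θ x θs
            rw [norm_sub_rev θ x] at this
            linarith
          have h2 : |h θ - h θs| * (‖x - θ‖ ^ (m + 1))⁻¹ ≤ M * ((η / 2) ^ (m + 1))⁻¹ := by
            gcongr
            exact hM θ hθ
          have h3 : 0 ≤ ε * (‖x - θ‖ ^ (m + 1))⁻¹ := by positivity
          linarith
    rw [integral_add (hKi.const_mul ε) (integrable_const _), integral_const_mul,
      integral_const, smul_eq_mul] at hle
    constructor
    · exact mul_nonneg hδ.le (integral_nonneg fun θ => by positivity)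
    · calc _ ≤ (1 - ‖x‖) * (ε * (C * 2 ^ (m + 1) / (1 - ‖x‖)) +
            ν.real univ * (M * ((η / 2) ^ (m + 1))⁻¹)) := by
            gcongr
            refine hle.trans ?_
            gcongr
        _ = _ := by
            field_simp
  rw [Metric.tendsto_nhds]
  intro ε hε
  set A := C * 2 ^ (m + 1) with hA
  have hA0 : 0 ≤ A := by positivity
  obtain ⟨D, hD⟩ := key (ε / (2 * (A + 1))) (by positivity)
  have hlim : Tendsto (fun x : EuclideanSpace ℝ (Fin (m + 1)) => (1 - ‖x‖) * D)
      (nhdsWithin θs (Metric.ball 0 1)) (nhds 0) := by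
    have : Continuous (fun x : EuclideanSpace ℝ (Fin (m + 1)) => (1 - ‖x‖) * D) := by fun_prop
    have h2 := (this.tendsto θs).mono_left (nhdsWithin_le_nhds (s := Metric.ball 0 1))
    simpa [hθn] using h2
  filter_upwards [hD, hlim.eventually (gt_mem_nhds (half_pos hε))] with x h1 h2
  rw [Real.dist_eq, sub_zero, abs_of_nonneg h1.1]
  refine h1.2.trans_lt ?_
  have : ε / (2 * (A + 1)) * A ≤ ε / 2 := by
    rw [div_mul_eq_mul_div, div_le_div_iff₀ (by positivity) (by positivity)]
    nlinarith
  linarith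
end
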